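/- arXiv:2404.11853 — 4 statements merged into one kernel-verified Lean document; each statement's English description precedes it below -/
import Mathlib

section
/- The exponent sequence is strictly increasing: for every integer m ≥ 1, ξ_m < ξ_{m+1}. -/
open Real Finset

/-- The exponent sequence is strictly increasing: for every integer `m ≥ 1`,
`ξ_m < ξ_{m+1}`, where `ξ_m` is the unique positive solution of
`Σ_{k=m+1}^{∞} x^k/k! = 1`. -/
theorem exponent_strict_mono (m : ℕ) (hm : 1 ≤ m) (x y : ℝ)
    (hx : 0 < x) (hxm : (∑' k : ℕ, x ^ (m + 1 + k) / (Nat.factorial (m + 1 + k) : ℝ)) = 1)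
    (hy : 0 < y)
    (hym : (∑' k : ℕ, y ^ (m + 1 + 1 + k) / (Nat.factorial (m + 1 + 1 + k) : ℝ)) = 1) :
    x < y := by
  by_contra! h
  have S : ∀ (z : ℝ) (n : ℕ), Summable fun k : ℕ => z ^ (n + k) / (Nat.factorial (n + k) : ℝ) := by
    intro z n
    have := (summable_nat_add_iff n).2 (Real.summable_pow_div_factorial z)
    simpa only [add_comm] using this
  have h1 := (S y (m + 1 + 1)).tsum_le_tsum (g := fun k : ℕ => x ^ (m + 1 + 1 + k) /
    (Nat.factorial (m + 1 + 1 + k) : ℝ)) (fun k => by gcongr) (S x (m + 1 + 1))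
  have h2 := (S x (m + 1)).tsum_eq_zero_add
  have h3 : (fun k : ℕ => x ^ (m + 1 + (k + 1)) / (Nat.factorial (m + 1 + (k + 1)) : ℝ)) =
      fun k : ℕ => x ^ (m + 1 + 1 + k) / (Nat.factorial (m + 1 + 1 + k) : ℝ) := by
    funext k
    rw [show m + 1 + (k + 1) = m + 1 + 1 + k by omega]
  rw [h3, add_zero] at h2
  have h4 : 0 < x ^ (m + 1) / (Nat.factorial (m + 1) : ℝ) := by positivity
  linarith
end

section
/- For every integer m ≥ 1, the exponent ξ_m satisfies (m!)^{1/m} < ξ_m < ((m+1)!)^{1/(m+1)}. -/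
open Real Finset

lemma fact_le_aux (m : ℕ) : (Nat.factorial m : ℝ) ≤ (((m : ℝ) + 1) / 2) ^ m := by
  induction m with
  | zero => simp
  | succ n ih =>
    have hn : (0 : ℝ) < (n : ℝ) + 1 := by positivity
    have hb : (2 : ℝ) ≤ (1 + 1 / ((n : ℝ) + 1)) ^ (n + 1) := by
      have h := one_add_mul_le_pow (a := 1 / ((n : ℝ) + 1))
        (by have : 0 < 1 / ((n : ℝ) + 1) := by positivity
            linarith) (n + 1)
      have h2 : (((n + 1 : ℕ) : ℝ)) * (1 / ((n : ℝ) + 1)) = 1 := by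
        push_cast; field_simp
      linarith
    have he : (((n + 1 : ℕ) : ℝ) + 1) / 2
        = (((n : ℝ) + 1) / 2) * (1 + 1 / ((n : ℝ) + 1)) := by
      push_cast; field_simp
    rw [he, mul_pow, Nat.factorial_succ]
    push_cast
    calc ((n : ℝ) + 1) * (Nat.factorial n : ℝ)
        ≤ ((n : ℝ) + 1) * (((n : ℝ) + 1) / 2) ^ n := by gcongr
      _ = (((n : ℝ) + 1) / 2) ^ (n + 1) * 2 := by ring
      _ ≤ _ := by gcongr

/-- For every integer `m ≥ 1`, the exponent `ξ_m` (the unique positive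
solution of `Σ_{k=m+1}^{∞} x^k/k! = 1`) satisfies
`(m!)^{1/m} < ξ_m < ((m+1)!)^{1/(m+1)}`. -/
theorem exponent_bounds (m : ℕ) (hm : 1 ≤ m) (x : ℝ) (hx : 0 < x)
    (hxm : (∑' k : ℕ, x ^ (m + 1 + k) / (Nat.factorial (m + 1 + k) : ℝ)) = 1) :
    (Nat.factorial m : ℝ) ^ ((1 : ℝ) / m) < x ∧
      x < (Nat.factorial (m + 1) : ℝ) ^ ((1 : ℝ) / (m + 1)) := by
  have hs : Summable (fun k : ℕ => x ^ (m + 1 + k) / (Nat.factorial (m + 1 + k) : ℝ)) := by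
    by_contra h
    rw [tsum_eq_zero_of_not_summable h] at hxm
    exact zero_ne_one hxm
  have hm0 : (0 : ℝ) < m := by exact_mod_cast hm
  constructor
  · have key : (Nat.factorial m : ℝ) < x ^ m := by
      by_contra! hle
      have hx2 : x ≤ ((m : ℝ) + 1) / 2 :=
        le_of_pow_le_pow_left₀ (by omega) (by positivity) (hle.trans (fact_le_aux m))
      have step : ∀ n : ℕ, x ^ (n + 1) / (Nat.factorial (n + 1) : ℝ)
          = x ^ n / (Nat.factorial n : ℝ) * (x / ((n : ℝ) + 1)) := by
        intro n
        have : (Nat.factorial n : ℝ) ≠ 0 := by positivity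
        rw [Nat.factorial_succ, pow_succ]; push_cast; field_simp
      have hr : ∀ k : ℕ, x / (((m + k : ℕ) : ℝ) + 1) ≤ 1 / 2 := by
        intro k
        rw [div_le_iff₀ (by positivity)]
        push_cast
        have : (0 : ℝ) ≤ k := by positivity
        linarith
      have hall : ∀ k : ℕ, x ^ (m + k) / (Nat.factorial (m + k) : ℝ) ≤ (1 / 2) ^ k := by
        intro k
        induction k with
        | zero =>
          simp only [add_zero, pow_zero]
          exact (div_le_one (by positivity)).2 hle
        | succ k ih =>
          rw [← add_assoc, step, pow_succ]
          exact mul_le_mul ih (hr k) (by positivity) (by positivity)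
      have hlt : x ^ (m + 1 + 1) / (Nat.factorial (m + 1 + 1) : ℝ) < 1 / 2 / 2 ^ 1 := by
        rw [step]
        have h1 := hall 1
        have h2 : x / (((m + 1 : ℕ) : ℝ) + 1) < 1 / 2 := by
          rw [div_lt_iff₀ (by positivity)]
          push_cast
          linarith
        have h3 : 0 < x / (((m + 1 : ℕ) : ℝ) + 1) := by positivity
        have h4 : 0 < x ^ (m + 1) / (Nat.factorial (m + 1) : ℝ) := by positivity
        nlinarith
      have hg := hasSum_geometric_two' (1 : ℝ)
      have := Summable.tsum_lt_tsum (i := 1) (fun k => by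
        have h := hall (k + 1)
        have e : m + (k + 1) = m + 1 + k := by ring
        rw [e] at h
        have e2 : (1 / 2 : ℝ) ^ (k + 1) = 1 / 2 / 2 ^ k := by
          rw [pow_succ, div_pow, one_pow]; ring
        rwa [e2] at h) hlt hs hg.summable
      rw [hxm, hg.tsum_eq] at this
      exact lt_irrefl _ this
    calc (Nat.factorial m : ℝ) ^ ((1 : ℝ) / m) < (x ^ m) ^ ((1 : ℝ) / m) :=
          Real.rpow_lt_rpow (by positivity) key (by positivity)
      _ = x := by
          rw [one_div]; exact Real.pow_rpow_inv_natCast hx.le (by omega)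
  · have key : x ^ (m + 1) < (Nat.factorial (m + 1) : ℝ) := by
      have h := hs.sum_le_tsum (range 2) (fun k _ => by positivity)
      rw [hxm, sum_range_succ, sum_range_one, add_zero] at h
      have h4 : 0 < x ^ (m + 1 + 1) / (Nat.factorial (m + 1 + 1) : ℝ) := by positivity
      exact (div_lt_one (by positivity)).1 (by linarith)
    calc x = (x ^ (m + 1)) ^ ((1 : ℝ) / (m + 1)) := by
          rw [one_div]
          have := Real.pow_rpow_inv_natCast hx.le (n := m + 1) (by omega)
          push_cast at this
          exact this.symm
      _ < _ := Real.rpow_lt_rpow (by positivity) key (by positivity)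
end

section
/- The exponent sequence satisfies lim_{m → ∞} ξ_m / m = 1/e; that is, the sequence m ↦ ξ_m/m tends to 1/e as m tends to infinity. -/
open Real Finset Filter

lemma aux_fact (m : ℕ) : ((m+1).factorial : ℝ) ≤
    exp (1 + log ((m+1 : ℕ):ℝ)) * (((m+1 : ℕ):ℝ) / exp 1) ^ (m+1) := by
  have h := Stirling.stirlingSeq'_antitone (Nat.zero_le m)
  simp only [Function.comp, Nat.succ_eq_add_one, zero_add, Stirling.stirlingSeq_one] at h
  rw [Stirling.stirlingSeq] at h
  have hn : (1:ℝ) ≤ ((m+1 : ℕ):ℝ) := by exact_mod_cast Nat.succ_le_succ (Nat.zero_le m)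
  generalize ((m+1 : ℕ):ℝ) = n at *
  have hp : 0 < (n / exp 1) ^ (m+1) := by positivity
  rw [div_le_iff₀ (by positivity)] at h
  refine h.trans ?_
  rw [exp_add, exp_log (by linarith), ← mul_assoc]
  refine mul_le_mul_of_nonneg_right ?_ hp.le
  rw [Real.sqrt_mul (by norm_num)]
  have h2 : √n ≤ n := by
    rw [Real.sqrt_le_left (by linarith)]; nlinarith
  have h3 : (0:ℝ) < √2 := by positivity
  calc exp 1 / √2 * (√2 * √n) = exp 1 * √n := by field_simp
    _ ≤ _ := by gcongr

lemma aux_summable (x : ℝ) (n : ℕ) : Summable (fun k : ℕ => x ^ (n + k) / ((n+k).factorial : ℝ)) := by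
  have := (summable_nat_add_iff n).2 (Real.summable_pow_div_factorial x)
  simpa [add_comm] using this

lemma aux_upper (x : ℝ) (hx : 0 < x) (m : ℕ)
    (h : (∑' k : ℕ, x ^ (m + 1 + k) / (Nat.factorial (m + 1 + k) : ℝ)) = 1) :
    x / ((m+1 : ℕ):ℝ) ≤ 1 / exp 1 * exp ((1 + log ((m+1 : ℕ):ℝ)) / ((m+1 : ℕ):ℝ)) := by
  have h1 := (aux_summable x (m+1)).le_tsum 0 (fun k _ => by positivity)
  rw [h, add_zero, div_le_one (by positivity)] at h1
  have h2 := h1.trans (aux_fact m)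
  have hn : (0:ℝ) < ((m+1 : ℕ):ℝ) := by positivity
  have h3 : exp (1 + log ((m+1 : ℕ):ℝ)) = exp ((1 + log ((m+1 : ℕ):ℝ)) / ((m+1 : ℕ):ℝ)) ^ (m+1) := by
    rw [← exp_nat_mul]; congr 1; field_simp
  rw [h3, ← mul_pow, pow_le_pow_iff_left₀ hx.le (by positivity) (by omega)] at h2
  rw [div_le_iff₀ hn]
  refine h2.trans (le_of_eq ?_)
  field_simp

lemma aux_lower (x : ℝ) (hx : 0 < x) (m : ℕ)
    (h : (∑' k : ℕ, x ^ (m + 1 + k) / (Nat.factorial (m + 1 + k) : ℝ)) = 1) :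
    1 / exp 1 ≤ x / ((m+1 : ℕ):ℝ) := by
  have hn : (0:ℝ) < ((m+1 : ℕ):ℝ) := by positivity
  have he : 1 ≤ exp 1 := by simp
  rcases le_total ((m+1 : ℕ):ℝ) x with hc | hc
  · calc 1 / exp 1 ≤ 1 := by rw [div_le_one (by positivity)]; exact he
      _ ≤ _ := by rwa [one_le_div hn]
  generalize hN : ((m+1 : ℕ):ℝ) = n at *
  have key : (1:ℝ) ≤ (x / n) ^ (m+1) * exp n := by
    rw [← h]
    have hb : ∀ k : ℕ, x ^ (m + 1 + k) / (Nat.factorial (m + 1 + k) : ℝ) ≤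
        (x/n)^(m+1) * (n ^ (m + 1 + k) / (Nat.factorial (m + 1 + k) : ℝ)) := by
      intro k
      rw [← mul_div_assoc]
      gcongr
      rw [div_pow, pow_add x (m+1) k, pow_add n (m+1) k, ← mul_assoc, div_mul_cancel₀ _ (by positivity)]
      gcongr
    refine ((aux_summable x (m+1)).tsum_le_tsum hb ((aux_summable n (m+1)).mul_left _)).trans ?_
    rw [tsum_mul_left]
    gcongr
    have h5 := (Real.summable_pow_div_factorial n).sum_add_tsum_nat_add (m+1)
    have h6 : exp n = ∑' k : ℕ, n ^ k / (k.factorial : ℝ) := by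
      rw [Real.exp_eq_exp_ℝ, NormedSpace.exp_eq_tsum_div]
    rw [h6, ← h5]
    have : 0 ≤ ∑ i ∈ range (m+1), n ^ i / (i.factorial : ℝ) := sum_nonneg fun i _ => by positivity
    simp only [add_comm _ (m+1)]
    linarith
  have h7 : exp n = exp 1 ^ (m+1) := by rw [← exp_nat_mul, hN, mul_one]
  rw [h7, ← mul_pow] at key
  have h8 : 1 ≤ x / n * exp 1 := by
    by_contra! hlt
    exact absurd key (not_le.2 (pow_lt_one₀ (by positivity) hlt (by omega)))
  rwa [div_le_iff₀ (by positivity)]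

/-- The exponent sequence satisfies `lim_{m → ∞} ξ_m / m = 1/e`, where for
each `m ≥ 1`, `ξ_m` is the unique positive solution of `Σ_{k=m+1}^{∞} x^k/k! = 1`. -/
theorem exponent_div_m_tendsto (ξ : ℕ → ℝ)
    (hpos : ∀ m : ℕ, 1 ≤ m → 0 < ξ m)
    (hξ : ∀ m : ℕ, 1 ≤ m →
      (∑' k : ℕ, (ξ m) ^ (m + 1 + k) / (Nat.factorial (m + 1 + k) : ℝ)) = 1) :
    Filter.Tendsto (fun m : ℕ => ξ m / (m : ℝ)) Filter.atTop (nhds (1 / Real.exp 1)) := by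
  have hcast : Tendsto (fun m : ℕ => ((m+1 : ℕ):ℝ)) atTop atTop :=
    tendsto_natCast_atTop_atTop.comp (tendsto_add_atTop_nat 1)
  have hlog : Tendsto (fun y : ℝ => (1 + log y) / y) atTop (nhds 0) := by
    have a := Real.tendsto_pow_log_div_mul_add_atTop 1 0 1 one_ne_zero
    have b := tendsto_inv_atTop_zero (𝕜 := ℝ)
    have c := b.add a
    simp only [add_zero, pow_one, one_mul] at c
    refine c.congr fun y => ?_
    rw [add_div, one_div]
  have hU : Tendsto (fun m : ℕ => 1 / exp 1 * exp ((1 + log ((m+1 : ℕ):ℝ)) / ((m+1 : ℕ):ℝ)))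
      atTop (nhds (1 / exp 1)) := by
    have := ((Real.continuous_exp.tendsto 0).comp (hlog.comp hcast)).const_mul (1 / exp 1)
    simpa [Function.comp_def] using this
  have hM : Tendsto (fun m : ℕ => ξ m / ((m+1 : ℕ):ℝ)) atTop (nhds (1 / exp 1)) := by
    refine tendsto_of_tendsto_of_tendsto_of_le_of_le' tendsto_const_nhds hU ?_ ?_
    · filter_upwards [eventually_ge_atTop 1] with m hm
      exact aux_lower _ (hpos m hm) m (hξ m hm)
    · filter_upwards [eventually_ge_atTop 1] with m hm
      exact aux_upper _ (hpos m hm) m (hξ m hm)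
  have hR : Tendsto (fun m : ℕ => 1 + ((m:ℝ))⁻¹) atTop (nhds 1) := by
    simpa using (tendsto_inv_atTop_nhds_zero_nat (𝕜 := ℝ)).const_add 1
  have hF := hM.mul hR
  rw [mul_one] at hF
  refine hF.congr' ?_
  filter_upwards [eventually_ge_atTop 1] with m hm
  have : (0:ℝ) < m := by exact_mod_cast hm
  push_cast
  field_simp
end

section
/- Let m ≥ 1 be an integer and let λ be a real number with 0 ≤ λ ≤ ξ_m. If N is a Poisson random variable with rate λ (i.e., P(N = k) = e^{−λ} λ^k/k! for each natural number k), then P(N ≤ m) ≥ 1 − e^{−ξ_m}. -/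
open Real MeasureTheory

lemma aux_deriv (m : ℕ) (x : ℝ) :
    HasDerivAt (fun x : ℝ => Real.exp (-x) * ∑ k ∈ Finset.range (m + 1), x ^ k / (Nat.factorial k : ℝ))
      (-(Real.exp (-x) * x ^ m / (Nat.factorial m : ℝ))) x := by
  induction m with
  | zero =>
    simpa using (hasDerivAt_neg x).exp
  | succ n ih =>
    have h1 := ((hasDerivAt_neg x).exp).mul
      ((hasDerivAt_pow (n + 1) x).div_const (Nat.factorial (n + 1) : ℝ))
    have h2 := ih.add h1
    have hf : (fun x : ℝ => Real.exp (-x) *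
        ∑ k ∈ Finset.range (n + 1 + 1), x ^ k / (Nat.factorial k : ℝ)) =
        (fun x : ℝ => Real.exp (-x) * ∑ k ∈ Finset.range (n + 1), x ^ k / (Nat.factorial k : ℝ)) +
        ((fun x : ℝ => Real.exp (-x)) * fun x : ℝ => x ^ (n + 1) / (Nat.factorial (n + 1) : ℝ)) := by
      funext y
      rw [Finset.sum_range_succ _ (n + 1)]
      simp only [Pi.add_apply, Pi.mul_apply]
      ring
    rw [hf]
    refine h2.congr_deriv ?_
    have h0 : (Nat.factorial n : ℝ) ≠ 0 := by positivity
    rw [Nat.factorial_succ]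
    push_cast
    have h3 : (n : ℝ) + 1 ≠ 0 := by positivity
    field_simp
    ring

lemma aux_anti (m : ℕ) {a b : ℝ} (ha : 0 ≤ a) (hab : a ≤ b) :
    Real.exp (-b) * ∑ k ∈ Finset.range (m + 1), b ^ k / (Nat.factorial k : ℝ) ≤
    Real.exp (-a) * ∑ k ∈ Finset.range (m + 1), a ^ k / (Nat.factorial k : ℝ) := by
  have h : AntitoneOn (fun x : ℝ => Real.exp (-x) *
      ∑ k ∈ Finset.range (m + 1), x ^ k / (Nat.factorial k : ℝ)) (Set.Ici 0) := by
    apply antitoneOn_of_deriv_nonpos (convex_Ici 0)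
    · exact fun x _ => (aux_deriv m x).continuousAt.continuousWithinAt
    · exact fun x _ => (aux_deriv m x).differentiableAt.differentiableWithinAt
    · intro x hx
      rw [(aux_deriv m x).deriv]
      have : 0 ≤ x := by
        rw [interior_Ici] at hx
        exact le_of_lt hx
      have : 0 ≤ Real.exp (-x) * x ^ m / (Nat.factorial m : ℝ) := by positivity
      linarith
  exact h ha (ha.trans hab) hab

lemma aux_tail (m : ℕ) (x : ℝ) :
    (∑' k : ℕ, x ^ (m + 1 + k) / (Nat.factorial (m + 1 + k) : ℝ)) =
      Real.exp x - ∑ k ∈ Finset.range (m + 1), x ^ k / (Nat.factorial k : ℝ) := by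
  have h := (Real.summable_pow_div_factorial x).sum_add_tsum_nat_add (m + 1)
  have he : Real.exp x = ∑' n : ℕ, x ^ n / (Nat.factorial n : ℝ) := by
    rw [Real.exp_eq_exp_ℝ, NormedSpace.exp_eq_tsum_div]
  rw [he, ← h]
  simp only [add_comm _ (m + 1)]
  ring

/-- Let `m ≥ 1` and let `0 ≤ λ ≤ ξ_m`, where `ξ_m` is the unique positive
solution of `Σ_{k=m+1}^{∞} x^k/k! = 1`. If `N` is a Poisson random variable with rate `λ`,
then `P(N ≤ m) ≥ 1 − e^{−ξ_m}`. -/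
theorem poisson_cdf_ge (m : ℕ) (hm : 1 ≤ m) (ξ lam : ℝ) (hξpos : 0 < ξ)
    (hξ : (∑' k : ℕ, ξ ^ (m + 1 + k) / (Nat.factorial (m + 1 + k) : ℝ)) = 1)
    (hlam0 : 0 ≤ lam) (hlamξ : lam ≤ ξ)
    {Ω : Type*} [MeasurableSpace Ω] (μ : Measure Ω) [IsProbabilityMeasure μ]
    (N : Ω → ℕ)
    (hN : ∀ k : ℕ,
      μ {ω | N ω = k} = ENNReal.ofReal (Real.exp (-lam) * lam ^ k / (Nat.factorial k : ℝ))) :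
    ENNReal.ofReal (1 - Real.exp (-ξ)) ≤ μ {ω | N ω ≤ m} := by
  have hsub : (1 : ENNReal) ≤ μ {ω | N ω ≤ m} + μ (⋃ k : ℕ, {ω | N ω = m + 1 + k}) := by
    rw [← measure_univ (μ := μ)]
    refine le_trans (measure_mono ?_) (measure_union_le _ _)
    intro ω _
    by_cases h : N ω ≤ m
    · exact Or.inl h
    · refine Or.inr (Set.mem_iUnion.2 ⟨N ω - (m + 1), ?_⟩)
      simp only [Set.mem_setOf_eq]
      omega
  have hle : μ (⋃ k : ℕ, {ω | N ω = m + 1 + k}) ≤ ENNReal.ofReal (Real.exp (-ξ)) := by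
    refine (measure_iUnion_le _).trans ?_
    simp only [hN]
    have hs : Summable fun k : ℕ =>
        Real.exp (-lam) * lam ^ (m + 1 + k) / (Nat.factorial (m + 1 + k) : ℝ) := by
      have h := ((summable_nat_add_iff (m + 1)).2
        (Real.summable_pow_div_factorial lam)).mul_left (Real.exp (-lam))
      refine h.congr fun k => ?_
      rw [add_comm k (m + 1)]
      ring
    rw [← ENNReal.ofReal_tsum_of_nonneg (fun k => by positivity) hs]
    apply ENNReal.ofReal_le_ofReal
    simp only [mul_div_assoc]
    rw [tsum_mul_left, aux_tail, mul_sub]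
    rw [aux_tail] at hξ
    have h := aux_anti m hlam0 hlamξ
    have h1 : Real.exp (-ξ) * Real.exp ξ = 1 := by rw [← Real.exp_add]; simp
    have h2 : Real.exp (-lam) * Real.exp lam = 1 := by rw [← Real.exp_add]; simp
    have h3 : ∑ k ∈ Finset.range (m + 1), ξ ^ k / (Nat.factorial k : ℝ) = Real.exp ξ - 1 := by
      linarith
    rw [h3, mul_sub, h1] at h
    linarith
  rw [ENNReal.ofReal_sub _ (Real.exp_pos _).le, ENNReal.ofReal_one]
  exact tsub_le_iff_right.2 (hsub.trans (by gcongr))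
end
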